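/- arXiv:1105.2712 — 3 statements merged into one kernel-verified Lean document; each statement's English description precedes it below -/
import Mathlib

section
/- Let V1, V2, V3 be finite-dimensional real inner product spaces and let d : V1 → V2 and δ : V2 → V3 be linear maps satisfying δ ∘ d = 0. Then the kernel of the operator δ* ∘ δ + d ∘ d* : V2 → V2 equals ker δ ∩ (range d)ᗮ, and consequently it is isomorphic as a real vector space to the quotient ker δ / range d. -/
/-!
Pairing `(δ* δ + d d*) x` with `x` gives `‖δ x‖² + ‖d* x‖²`, so a harmonic `x` satisfies `δ x = 0`
and `d* x = 0`; the latter says `x ∈ (range d)ᗮ`. For the isomorphism, each cocycle differs from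
its orthogonal projection to `(range d)ᗮ` by a coboundary, and since `δ ∘ d = 0` that projection is
again a cocycle. Hence every class has a harmonic representative, and it is unique because
`range d ⊓ (range d)ᗮ = ⊥`.
-/

section Hodge

variable {V1 V2 V3 : Type*}
  [NormedAddCommGroup V1] [InnerProductSpace ℝ V1] [FiniteDimensional ℝ V1]
  [NormedAddCommGroup V2] [InnerProductSpace ℝ V2] [FiniteDimensional ℝ V2]
  [NormedAddCommGroup V3] [InnerProductSpace ℝ V3] [FiniteDimensional ℝ V3]

theorem adjoint_apply_eq_zero_iff_mem_orthogonal (d : V1 →ₗ[ℝ] V2) (x : V2) :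
    LinearMap.adjoint d x = 0 ↔ x ∈ (LinearMap.range d)ᗮ := by
  rw [Submodule.mem_orthogonal]
  constructor
  · rintro hx _ ⟨y, rfl⟩
    rw [← LinearMap.adjoint_inner_right, hx, inner_zero_right]
  · intro hx
    rw [← inner_self_eq_zero (𝕜 := ℝ), LinearMap.adjoint_inner_right]
    exact hx _ ⟨_, rfl⟩

theorem ker_laplacian (d : V1 →ₗ[ℝ] V2) (δ : V2 →ₗ[ℝ] V3) :
    LinearMap.ker (LinearMap.adjoint δ ∘ₗ δ + d ∘ₗ LinearMap.adjoint d)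
      = LinearMap.ker δ ⊓ (LinearMap.range d)ᗮ := by
  ext x
  rw [Submodule.mem_inf, ← adjoint_apply_eq_zero_iff_mem_orthogonal]
  simp only [LinearMap.mem_ker, LinearMap.add_apply, LinearMap.comp_apply]
  constructor
  · intro hx
    have key : inner ℝ (δ x) (δ x)
        + inner ℝ (LinearMap.adjoint d x) (LinearMap.adjoint d x) = 0 := by
      rw [← LinearMap.adjoint_inner_right, LinearMap.adjoint_inner_left, ← inner_add_right, hx,
        inner_zero_right]
    have h1 : 0 ≤ inner ℝ (δ x) (δ x) := real_inner_self_nonneg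
    have h2 : 0 ≤ inner ℝ (LinearMap.adjoint d x) (LinearMap.adjoint d x) :=
      real_inner_self_nonneg
    exact ⟨inner_self_eq_zero (𝕜 := ℝ).1 (by linarith),
      inner_self_eq_zero (𝕜 := ℝ).1 (by linarith)⟩
  · rintro ⟨h1, h2⟩
    rw [h1, h2, map_zero, map_zero, add_zero]

end Hodge


/-- **Discrete Hodge theorem (Eckmann).**
Let `V1, V2, V3` be finite-dimensional real inner product spaces and `d : V1 → V2`,
`δ : V2 → V3` linear maps with `δ ∘ d = 0`.  Then the kernel of the Laplace-type operator
`δ* ∘ δ + d ∘ d* : V2 → V2` equals `ker δ ⊓ (range d)ᗮ`, and consequently it is isomorphic,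
as a real vector space, to the quotient `ker δ / range d`. -/
theorem kernel_laplacian_eq_and_iso_cohomology
    {V1 V2 V3 : Type*}
    [NormedAddCommGroup V1] [InnerProductSpace ℝ V1] [FiniteDimensional ℝ V1]
    [NormedAddCommGroup V2] [InnerProductSpace ℝ V2] [FiniteDimensional ℝ V2]
    [NormedAddCommGroup V3] [InnerProductSpace ℝ V3] [FiniteDimensional ℝ V3]
    (d : V1 →ₗ[ℝ] V2) (δ : V2 →ₗ[ℝ] V3) (h : δ ∘ₗ d = 0) :
    LinearMap.ker (LinearMap.adjoint δ ∘ₗ δ + d ∘ₗ LinearMap.adjoint d)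
        = LinearMap.ker δ ⊓ (LinearMap.range d)ᗮ ∧
      Nonempty
        ((LinearMap.ker (LinearMap.adjoint δ ∘ₗ δ + d ∘ₗ LinearMap.adjoint d)) ≃ₗ[ℝ]
          (↥(LinearMap.ker δ) ⧸ Submodule.comap (LinearMap.ker δ).subtype (LinearMap.range d))) := by
  refine ⟨ker_laplacian d δ, ?_⟩
  rw [ker_laplacian d δ]
  refine ⟨LinearEquiv.ofBijective
    ((Submodule.comap (LinearMap.ker δ).subtype (LinearMap.range d)).mkQ ∘ₗ
      Submodule.inclusion inf_le_left) ⟨?_, ?_⟩⟩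
  · rw [injective_iff_map_eq_zero]
    rintro ⟨x, hx⟩ h0
    have hr : (⟨x, hx.1⟩ : LinearMap.ker δ) ∈
        Submodule.comap (LinearMap.ker δ).subtype (LinearMap.range d) :=
      (Submodule.Quotient.mk_eq_zero _).1 h0
    exact Subtype.ext (inner_self_eq_zero (𝕜 := ℝ).1 (hx.2 x hr))
  · intro q
    obtain ⟨⟨x, hx⟩, rfl⟩ := Submodule.Quotient.mk_surjective _ q
    obtain ⟨_, ⟨y, rfl⟩, z, hz, rfl⟩ := (LinearMap.range d).exists_add_mem_mem_orthogonal x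
    have hd : δ (d y) = 0 := LinearMap.congr_fun h y
    have hδz : δ z = 0 := by simpa [hd] using hx
    refine ⟨⟨z, hδz, hz⟩, (Submodule.Quotient.eq _).2 ⟨-y, ?_⟩⟩
    simp
end

section
/- Let C^0, C^1, …, C^d be finite-dimensional real inner product spaces with linear maps δ_j : C^j → C^{j+1} for 0 ≤ j ≤ d−1 satisfying δ_j ∘ δ_{j−1} = 0, and set δ_{−1} := 0 and δ_d := 0. Let H^j := ker δ_j / im δ_{j−1}. Then for every 0 ≤ i ≤ d, the dimension of the kernel of δ_i* δ_i : C^i → C^i equals dim C^i − Σ_{j=0}^{i} (−1)^{i+j} (dim C^j − dim H^j), and equivalently it equals dim C^i + Σ_{j=1}^{d−i} (−1)^j (dim C^{i+j} − dim H^{i+j}). -/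
/-!
Write `c_j = dim C^j`, `r_j = rank δ_j`, with `r_{-1} = 0`. Since `⟪δ* δ x, x⟫ = ‖δ x‖²`, the maps
`δ* δ` and `δ` have the same kernel, so the dimension sought is `c_i - r_i`. Rank-nullity and
`dim H^j = dim ker δ_j - r_{j-1}` give `c_j - dim H^j = r_j + r_{j-1}`, so both alternating sums
telescope: the one from `0` to `i` equals `r_i`, and the one over the degrees `i + 1, …, d` equals
`± r_d - r_i = -r_i`.
-/

/-- The operators `T* T` and `T` have the same kernel. -/
lemma ker_adjoint_comp_self_eq {E F : Type*}
    [NormedAddCommGroup E] [InnerProductSpace ℝ E] [FiniteDimensional ℝ E]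
    [NormedAddCommGroup F] [InnerProductSpace ℝ F] [FiniteDimensional ℝ F] (T : E →ₗ[ℝ] F) :
    LinearMap.ker (LinearMap.adjoint T ∘ₗ T) = LinearMap.ker T := by
  ext x
  simp only [LinearMap.mem_ker, LinearMap.comp_apply]
  refine ⟨fun h => ?_, fun h => by simp [h]⟩
  have h2 : inner ℝ (LinearMap.adjoint T (T x)) x = 0 := by simp [h]
  rwa [LinearMap.adjoint_inner_left, inner_self_eq_zero] at h2

lemma finrank_cohomology_add_finrank_range {U V W : Type*}
    [AddCommGroup U] [Module ℝ U] [AddCommGroup V] [Module ℝ V] [FiniteDimensional ℝ V]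
    [AddCommGroup W] [Module ℝ W] (f : U →ₗ[ℝ] V) (g : V →ₗ[ℝ] W) (h : g ∘ₗ f = 0) :
    Module.finrank ℝ (↥(LinearMap.ker g) ⧸
        Submodule.comap (LinearMap.ker g).subtype (LinearMap.range f))
      + Module.finrank ℝ (LinearMap.range f) = Module.finrank ℝ (LinearMap.ker g) := by
  have hle : LinearMap.range f ≤ LinearMap.ker g := LinearMap.range_le_ker_iff.2 h
  rw [← (Submodule.comapSubtypeEquivOfLe hle).finrank_eq]
  exact Submodule.finrank_quotient_add_finrank _

/-- If `a_0 = r_0` and `a_{j+1} = r_{j+1} + r_j`, the alternating sum of `a_0, …, a_i` is `r_i`. -/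
lemma alternating_sum_range_eq (a r : ℕ → ℤ) (h0 : a 0 = r 0)
    (hs : ∀ j, a (j + 1) = r (j + 1) + r j) (i : ℕ) :
    ∑ j ∈ Finset.range (i + 1), (-1 : ℤ) ^ (i + j) * a j = r i := by
  induction i with
  | zero => simp [h0]
  | succ i ih =>
    rw [Finset.sum_range_succ, hs, ← two_mul, pow_mul]
    have : ∑ j ∈ Finset.range (i + 1), (-1 : ℤ) ^ (i + 1 + j) * a j = -r i := by
      rw [← ih, ← Finset.sum_neg_distrib]
      exact Finset.sum_congr rfl fun j _ => by ring
    rw [this]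
    norm_num

lemma alternating_sum_Icc_eq (a r : ℕ → ℤ)
    (hs : ∀ j, a (j + 1) = r (j + 1) + r j) (i n : ℕ) :
    ∑ j ∈ Finset.Icc 1 n, (-1 : ℤ) ^ j * a (i + j) = (-1) ^ n * r (i + n) - r i := by
  induction n with
  | zero => simp
  | succ n ih =>
    rw [Finset.sum_Icc_succ_top (by omega), ih, ← add_assoc, hs]
    ring

/-- Number of zeros in the spectrum of the up Laplacian `δ_i* δ_i` of a cochain complex
`C^0 → C^1 → ⋯ → C^d` of finite-dimensional real inner product spaces (with `δ_{-1} := 0`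
and `δ_d := 0`).  Here `hH j` is the dimension of the `j`-th cohomology
`H^j = ker δ_j / im δ_{j-1}`.  For every `0 ≤ i ≤ d`,
`dim ker (δ_i* δ_i) = dim C^i − Σ_{j=0}^{i} (−1)^{i+j} (dim C^j − dim H^j)`
`                   = dim C^i + Σ_{j=1}^{d−i} (−1)^j (dim C^{i+j} − dim H^{i+j})`. -/
theorem finrank_ker_upLaplacian
    (d : ℕ) (C : ℕ → Type)
    [∀ j, NormedAddCommGroup (C j)] [∀ j, InnerProductSpace ℝ (C j)]
    [∀ j, FiniteDimensional ℝ (C j)]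
    (δ : ∀ j, C j →ₗ[ℝ] C (j + 1))
    (hcomp : ∀ j, δ (j + 1) ∘ₗ δ j = 0)
    (hend : ∀ j, d ≤ j → δ j = 0)
    (hH : ℕ → ℕ)
    (hH0 : hH 0 = Module.finrank ℝ (LinearMap.ker (δ 0)))
    (hHs : ∀ j, hH (j + 1) =
      Module.finrank ℝ
        (↥(LinearMap.ker (δ (j + 1))) ⧸
          Submodule.comap (LinearMap.ker (δ (j + 1))).subtype (LinearMap.range (δ j)))) :
    ∀ i ≤ d,
      ((Module.finrank ℝ (LinearMap.ker (LinearMap.adjoint (δ i) ∘ₗ δ i)) : ℤ)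
          = (Module.finrank ℝ (C i) : ℤ)
            - ∑ j ∈ Finset.range (i + 1),
                (-1 : ℤ) ^ (i + j) * ((Module.finrank ℝ (C j) : ℤ) - (hH j : ℤ)))
      ∧ ((Module.finrank ℝ (LinearMap.ker (LinearMap.adjoint (δ i) ∘ₗ δ i)) : ℤ)
          = (Module.finrank ℝ (C i) : ℤ)
            + ∑ j ∈ Finset.Icc 1 (d - i),
                (-1 : ℤ) ^ j * ((Module.finrank ℝ (C (i + j)) : ℤ) - (hH (i + j) : ℤ))) := by
  intro i hi
  have hrn (j : ℕ) := (δ j).finrank_range_add_finrank_ker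
  have h0 : (Module.finrank ℝ (C 0) : ℤ) - hH 0 = Module.finrank ℝ (LinearMap.range (δ 0)) := by
    have := hrn 0
    omega
  have hs (j : ℕ) : (Module.finrank ℝ (C (j + 1)) : ℤ) - hH (j + 1) =
      Module.finrank ℝ (LinearMap.range (δ (j + 1))) + Module.finrank ℝ (LinearMap.range (δ j)) := by
    have h1 := hrn (j + 1)
    have h2 := finrank_cohomology_add_finrank_range (δ j) (δ (j + 1)) (hcomp j)
    rw [← hHs] at h2
    omega
  have hd : Module.finrank ℝ (LinearMap.range (δ d)) = 0 := by
    rw [hend d le_rfl, LinearMap.range_zero, finrank_bot]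
  rw [ker_adjoint_comp_self_eq,
    alternating_sum_range_eq (fun j => (Module.finrank ℝ (C j) : ℤ) - hH j)
      (fun j => (Module.finrank ℝ (LinearMap.range (δ j)) : ℤ)) h0 hs i,
    alternating_sum_Icc_eq (fun j => (Module.finrank ℝ (C j) : ℤ) - hH j)
      (fun j => (Module.finrank ℝ (LinearMap.range (δ j)) : ℤ)) hs i (d - i),
    Nat.add_sub_cancel' hi, hd]
  have := hrn i
  constructor
  · omega
  · simp only [Nat.cast_zero, mul_zero]
    omega
end

section
/- Let C^0, C^1, …, C^d be finite-dimensional real inner product spaces with linear maps δ_j : C^j → C^{j+1} for 0 ≤ j ≤ d−1 satisfying δ_j ∘ δ_{j−1} = 0, and set δ_{−1} := 0 and δ_d := 0. Let H^j := ker δ_j / im δ_{j−1}. Then for every 0 ≤ i ≤ d, the dimension of the kernel of δ_{i−1} ∘ δ_{i−1}* : C^i → C^i equals dim C^i − Σ_{j=0}^{i−1} (−1)^{i−1+j} (dim C^j − dim H^j). -/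
/-!
The kernel of `δ δ*` is the kernel of `δ*`, which is the orthogonal complement of `range δ`; hence
`dim ker (L (k + 1)) = dim C^{k+1} - rank δ_k`. By rank-nullity and the definition of cohomology,
`dim C^j - dim H^j = rank δ_j + rank δ_{j-1}`, so the alternating sum telescopes to `rank δ_{i-1}`.
-/

open Module in
theorem finrank_ker_comp_adjoint {E F : Type*}
    [NormedAddCommGroup E] [InnerProductSpace ℝ E] [FiniteDimensional ℝ E]
    [NormedAddCommGroup F] [InnerProductSpace ℝ F] [FiniteDimensional ℝ F] (T : E →ₗ[ℝ] F) :
    finrank ℝ (LinearMap.ker (T ∘ₗ LinearMap.adjoint T)) + finrank ℝ (LinearMap.range T)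
      = finrank ℝ F := by
  rw [LinearMap.ker_self_comp_adjoint, ← LinearMap.orthogonal_range, add_comm,
    Submodule.finrank_add_finrank_orthogonal]

open Module in
theorem finrank_cohomology_add {E F G : Type*}
    [AddCommGroup E] [Module ℝ E] [AddCommGroup F] [Module ℝ F] [FiniteDimensional ℝ F]
    [AddCommGroup G] [Module ℝ G] (S : E →ₗ[ℝ] F) (T : F →ₗ[ℝ] G) (h : T ∘ₗ S = 0) :
    finrank ℝ (↥(LinearMap.ker T) ⧸
        Submodule.comap (LinearMap.ker T).subtype (LinearMap.range S))
      + finrank ℝ (LinearMap.range S) + finrank ℝ (LinearMap.range T) = finrank ℝ F := by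
  have hle : LinearMap.range S ≤ LinearMap.ker T := LinearMap.range_le_ker_iff.2 h
  have h1 := Submodule.finrank_quotient_add_finrank
    (Submodule.comap (LinearMap.ker T).subtype (LinearMap.range S))
  have h2 := (Submodule.comapSubtypeEquivOfLe hle).finrank_eq
  have h3 := LinearMap.finrank_range_add_finrank_ker T
  omega

/-- Number of zeros in the spectrum of the down Laplacian `δ_{i−1} δ_{i−1}*` of a cochain
complex `C^0 → C^1 → ⋯ → C^d` of finite-dimensional real inner product spaces (with
`δ_{-1} := 0` and `δ_d := 0`).  Here `L i : C^i → C^i` is the down Laplacian (`L 0 = 0`,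
`L (i+1) = δ_i ∘ δ_i*`) and `hH j` is the dimension of the `j`-th cohomology
`H^j = ker δ_j / im δ_{j-1}`.  For every `0 ≤ i ≤ d`,
`dim ker (L i) = dim C^i − Σ_{j=0}^{i−1} (−1)^{i−1+j} (dim C^j − dim H^j)`. -/
theorem finrank_ker_downLaplacian
    (d : ℕ) (C : ℕ → Type)
    [∀ j, NormedAddCommGroup (C j)] [∀ j, InnerProductSpace ℝ (C j)]
    [∀ j, FiniteDimensional ℝ (C j)]
    (δ : ∀ j, C j →ₗ[ℝ] C (j + 1))
    (hcomp : ∀ j, δ (j + 1) ∘ₗ δ j = 0)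
    (hend : ∀ j, d ≤ j → δ j = 0)
    (L : ∀ i, C i →ₗ[ℝ] C i)
    (hL0 : L 0 = 0)
    (hLs : ∀ i, L (i + 1) = δ i ∘ₗ LinearMap.adjoint (δ i))
    (hH : ℕ → ℕ)
    (hH0 : hH 0 = Module.finrank ℝ (LinearMap.ker (δ 0)))
    (hHs : ∀ j, hH (j + 1) =
      Module.finrank ℝ
        (↥(LinearMap.ker (δ (j + 1))) ⧸
          Submodule.comap (LinearMap.ker (δ (j + 1))).subtype (LinearMap.range (δ j)))) :
    ∀ i ≤ d,
      (Module.finrank ℝ (LinearMap.ker (L i)) : ℤ)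
        = (Module.finrank ℝ (C i) : ℤ)
          - ∑ j ∈ Finset.range i,
              (-1 : ℤ) ^ (i - 1 + j) * ((Module.finrank ℝ (C j) : ℤ) - (hH j : ℤ)) := by
  intro i _
  cases i with
  | zero => rw [hL0, LinearMap.ker_zero, finrank_top, Finset.sum_range_zero, sub_zero]
  | succ k =>
    have hsum : ∑ j ∈ Finset.range (k + 1),
        (-1 : ℤ) ^ (k + j) * ((Module.finrank ℝ (C j) : ℤ) - (hH j : ℤ))
          = Module.finrank ℝ (LinearMap.range (δ k)) := by
      induction k with
      | zero =>
        have h := LinearMap.finrank_range_add_finrank_ker (δ 0)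
        simp only [zero_add, Finset.sum_range_one, pow_zero, one_mul]
        omega
      | succ k ih =>
        have h := finrank_cohomology_add (δ k) (δ (k + 1)) (hcomp k)
        rw [← hHs] at h
        -- Passing from `k` to `k + 1` flips the sign of every earlier summand.
        have hflip : ∑ j ∈ Finset.range (k + 1),
            (-1 : ℤ) ^ (k + 1 + j) * ((Module.finrank ℝ (C j) : ℤ) - (hH j : ℤ))
              = -(Module.finrank ℝ (LinearMap.range (δ k)) : ℤ) := by
          rw [← ih (by omega), ← Finset.sum_neg_distrib]
          exact Finset.sum_congr rfl fun j _ => by ring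
        rw [Finset.sum_range_succ, hflip, Even.neg_one_pow ⟨k + 1, rfl⟩]
        omega
    have h := finrank_ker_comp_adjoint (δ k)
    rw [← hLs] at h
    rw [Nat.add_sub_cancel, hsum]
    omega
end
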